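/- arXiv:1607.08413 — 2 statements merged into one kernel-verified Lean document; each statement's English description precedes it below -/
import Mathlib

section
/- Let n ≥ 2 be an integer and let Λ ⊂ ℝ² be a closed set that is 2-periodic with respect to the second variable. Let f_1, …, f_n ∈ L¹(ℝ) satisfy f̂_1(ξ) + e^{πiη} f̂_2(ξ) + ⋯ + e^{(n−1)πiη} f̂_n(ξ) = 0 for all (ξ, η) ∈ Λ. If 2 ≤ k ≤ n−1 and ξ_0 ∈ Π^k(Λ) \ Π^{k*}_{su}(Λ), then f̂_j(ξ_0) = 0 for every j = 1, …, n. -/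
open MeasureTheory Complex

/-- Fourier transform with the convention `f̂(ξ) = ∫ e^{πixξ} f(x) dx`. -/
noncomputable def FT (f : ℝ → ℂ) (ξ : ℝ) : ℂ :=
  ∫ x : ℝ, Complex.exp (Real.pi * Complex.I * x * ξ) * f x

/-- `e^{πiη}`. -/
noncomputable def cexpEta (η : ℝ) : ℂ := Complex.exp (Real.pi * Complex.I * η)

/-- `Λ` is 2-periodic with respect to the second variable. -/
def Periodic2 (Λ : Set (ℝ × ℝ)) : Prop :=
  ∀ ξ η : ℝ, (ξ, η) ∈ Λ ↔ (ξ, η + 2) ∈ Λ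

/-- The projection `Π(Λ)` of `Λ` on the x-axis. -/
def proj (Λ : Set (ℝ × ℝ)) : Set ℝ := {ξ | ∃ η : ℝ, (ξ, η) ∈ Λ}

/-- `Img(ξ) = {η ∈ [0,2) : (ξ,η) ∈ Λ}`. -/
def Img (Λ : Set (ℝ × ℝ)) (ξ : ℝ) : Set ℝ := {η | η ∈ Set.Ico (0 : ℝ) 2 ∧ (ξ, η) ∈ Λ}

/-- `Π^k(Λ)` for `k < n`: points of `Π(Λ)` whose `Img` has exactly `k` elements. -/
def projExact (Λ : Set (ℝ × ℝ)) (k : ℕ) : Set ℝ :=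
  {ξ | ξ ∈ proj Λ ∧ (Img Λ ξ).encard = k}

/-- `Π^n(Λ)`: points of `Π(Λ)` whose `Img` has at least `n` elements. -/
def projAtLeast (Λ : Set (ℝ × ℝ)) (n : ℕ) : Set ℝ :=
  {ξ | ξ ∈ proj Λ ∧ (n : ℕ∞) ≤ (Img Λ ξ).encard}

/-- `ψ ∈ P^{E,ξ}_l` : there are an open interval `I ∋ ξ` and `φ_1,…,φ_{l-1} ∈ L¹(ℝ)` with
`φ̂_1 + φ̂_2 ψ + ⋯ + φ̂_{l-1} ψ^{l-2} + ψ^{l-1} = 0` on `I ∩ E`. -/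
def Pmem (E : Set ℝ) (ξ : ℝ) (l : ℕ) (ψ : ℝ → ℂ) : Prop :=
  ∃ a b : ℝ, ξ ∈ Set.Ioo a b ∧
    ∃ φ : Fin (l - 1) → ℝ → ℂ, (∀ i, Integrable (φ i)) ∧
      ∀ x ∈ Set.Ioo a b ∩ E,
        (∑ i : Fin (l - 1), FT (φ i) x * ψ x ^ (i : ℕ)) + ψ x ^ (l - 1) = 0

/-- `Π^{1*}(Λ)`: those `ξ ∈ Π^1(Λ)` such that `χ ∈ P^{Π^1(Λ),ξ}_n`, where
`χ(ξ') = e^{πiη}` with `η` the unique element of `Img(ξ')`. -/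
def projOneStar (Λ : Set (ℝ × ℝ)) (n : ℕ) : Set ℝ :=
  {ξ | ξ ∈ projExact Λ 1 ∧ ∃ χ : ℝ → ℂ,
    (∀ ξ' ∈ projExact Λ 1, ∀ η ∈ Img Λ ξ', χ ξ' = cexpEta η) ∧
    Pmem (projExact Λ 1) ξ n χ}

/-- `Π^{k*}_{su}(Λ)`. -/
def projStarSu (Λ : Set (ℝ × ℝ)) (n k : ℕ) : Set ℝ :=
  {ξ | ξ ∈ projExact Λ k ∧ ∃ a b : ℝ, ξ ∈ Set.Ioo a b ∧
    ∃ φ : Fin (n - 1) → ℝ → ℂ, (∀ i, Integrable (φ i)) ∧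
      ∀ ξ' ∈ Set.Ioo a b ∩ projExact Λ k, ∀ η ∈ Img Λ ξ',
        (∑ i : Fin (n - 1), FT (φ i) ξ' * cexpEta η ^ (i : ℕ)) = -(cexpEta η ^ (n - 1))}

/-- `Π^{k*}_{ne}(Λ)` for `k ≥ 2`. -/
def projStarNe (Λ : Set (ℝ × ℝ)) (k : ℕ) : Set ℝ :=
  {ξ | ξ ∈ projExact Λ k ∧ ∃ a b : ℝ, ξ ∈ Set.Ioo a b ∧
    ∃ φ : Fin k → ℝ → ℂ, (∀ i, Integrable (φ i)) ∧
      ∀ ξ' ∈ Set.Ioo a b ∩ projExact Λ k, ∀ η ∈ Img Λ ξ',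
        (∑ i : Fin k, FT (φ i) ξ' * cexpEta η ^ (i : ℕ)) = -(cexpEta η ^ k)}

/-- `(Γ, Λ)` with `Γ = ℝ × {0,…,n-1}` is a Heisenberg uniqueness pair: every admissible
measure `μ = Σ_m (x ↦ (x,m))_*(f_m dx)` (with each `f_m ∈ L¹(ℝ)`) whose Fourier transform
`μ̂(ξ,η) = Σ_m e^{mπiη} f̂_m(ξ)` vanishes on `Λ` must be zero, i.e. each `f_m = 0` a.e. -/
def IsHUP (n : ℕ) (Λ : Set (ℝ × ℝ)) : Prop :=
  ∀ f : Fin n → ℝ → ℂ, (∀ m, Integrable (f m)) →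
    (∀ ξ η : ℝ, (ξ, η) ∈ Λ → ∑ m : Fin n, cexpEta η ^ (m : ℕ) * FT (f m) ξ = 0) →
    ∀ m, f m =ᵐ[volume] (0 : ℝ → ℂ)

/-! If some `f̂_j(ξ₀) ≠ 0`, the polynomial `p(z) = ∑ f̂_l(ξ₀) z^l` is nonzero. Multiplying the
coefficients `f̂_l` by `Ŵ`, where `W ∈ L¹` and `Ŵ = 1` near `ξ₀`, turns `∑ f̂_l(ξ) z^l = 0` into
`p(z) + r(z) = 0` near `ξ₀`. By the continuity of translation in `L¹`, the coefficients
`f_l * W - f̂_l(ξ₀) W` of `r` are small in `L¹` once `W` is concentrated enough in frequency.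

Division by `p` and the inverse function theorem for `u ↦ u + S(u) T(u)`, with `S(u)` the quotient
and `T(u)` the remainder, factor `p + r = (1 + s) (p + t)` with `deg t < deg p` and `s` small. So
`1 + s` has no zero in the closed unit disc, and `z = e^{πiη}` is a root of `p + t`, whose leading
coefficient is that of `p`. This is a monic relation of degree `deg p ≤ n - 1` with coefficients in
the Fourier image of `L¹` near `ξ₀`; a power of `z` raises its degree to `n - 1`. -/

section PolynomialPerturbation

open Polynomial Topology

variable {𝕜 A : Type*} [NontriviallyNormedField 𝕜] [NormedAddCommGroup A] [NormedSpace 𝕜 A]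

/-- The value `∑ χ(v_l) z^l` at the point `(χ, z)` of the polynomial `∑ v_l Z^l` with coefficients
in `A`, where `χ` is a linear functional on `A` (a character, in the applications). -/
def charEval (χ : A →L[𝕜] 𝕜) (z : 𝕜) {d : ℕ} (v : Fin d → A) : 𝕜 :=
  ∑ l, χ (v l) * z ^ (l : ℕ)

theorem charEval_add (χ : A →L[𝕜] 𝕜) (z : 𝕜) {d : ℕ} (v w : Fin d → A) :
    charEval χ z (v + w) = charEval χ z v + charEval χ z w := by
  simp only [charEval, Pi.add_apply, map_add, add_mul, Finset.sum_add_distrib]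

theorem charEval_cons (χ : A →L[𝕜] 𝕜) (z : 𝕜) {d : ℕ} (a : A) (v : Fin d → A) :
    charEval χ z (Fin.cons a v : Fin (d + 1) → A) = χ a + z * charEval χ z v := by
  simp only [charEval, Fin.sum_univ_succ, Fin.cons_zero, Fin.cons_succ, Fin.val_zero, pow_zero,
    mul_one, Fin.val_succ, pow_succ', mul_left_comm, Finset.mul_sum]

theorem norm_charEval_le {χ : A →L[𝕜] 𝕜} (hχ : ∀ x, ‖χ x‖ ≤ ‖x‖) {z : 𝕜} (hz : ‖z‖ ≤ 1) {d : ℕ}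
    (v : Fin d → A) : ‖charEval χ z v‖ ≤ ∑ l, ‖v l‖ := by
  refine norm_sum_le_of_le _ fun l _ => ?_
  rw [norm_mul, norm_pow]
  exact (mul_le_of_le_one_right (norm_nonneg _) (pow_le_one₀ (norm_nonneg z) hz)).trans (hχ _)

/-- The coefficient vector of `∑ u_l q_l`, truncated to degree `< d`, for scalar polynomials `q_l`
and vectors `u_l`. -/
def polyComb {N : ℕ} (q : Fin N → 𝕜[X]) (d : ℕ) : (Fin N → A) →L[𝕜] (Fin d → A) :=
  ContinuousLinearMap.pi fun i => ∑ l, (q l).coeff i • ContinuousLinearMap.proj l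

theorem charEval_polyComb (χ : A →L[𝕜] 𝕜) (z : 𝕜) {N d : ℕ} {q : Fin N → 𝕜[X]}
    (hq : ∀ l, (q l).degree < d) (u : Fin N → A) :
    charEval χ z (polyComb q d u) = ∑ l, χ (u l) * (q l).eval z := by
  have eval_q (l : Fin N) : (q l).eval z = ∑ i : Fin d, (q l).coeff i * z ^ (i : ℕ) :=
    eval_eq_sum_degreeLTEquiv (mem_degreeLT.mpr (hq l)) z
  simp only [charEval, polyComb, ContinuousLinearMap.coe_pi', sum_apply, smul_apply,
    ContinuousLinearMap.proj_apply, map_sum, map_smul, smul_eq_mul, eval_q, Finset.mul_sum,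
    Finset.sum_mul]
  rw [Finset.sum_comm]
  exact Finset.sum_congr rfl fun l _ => Finset.sum_congr rfl fun i _ => by ring

/-- The coefficient vector, truncated to degree `< N`, of the product of two polynomials with
coefficients in `A`, where the multiplication of `A` is given as a bilinear map `B`. -/
def cauchyProduct (B : A →L[𝕜] A →L[𝕜] A) {a b : ℕ} (N : ℕ) (s : Fin a → A) (t : Fin b → A) :
    Fin N → A :=
  fun l => ∑ i : Fin a, ∑ j : Fin b, if (i : ℕ) + j = l then B (s i) (t j) else 0

theorem charEval_cauchyProduct {B : A →L[𝕜] A →L[𝕜] A} {χ : A →L[𝕜] 𝕜}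
    (hχ : ∀ x y, χ (B x y) = χ x * χ y) (z : 𝕜) {a b N : ℕ} (hN : a + b ≤ N)
    (s : Fin a → A) (t : Fin b → A) :
    charEval χ z (cauchyProduct B N s t) = charEval χ z s * charEval χ z t := by
  have coeff_term (i : Fin a) (j : Fin b) :
      ∑ l : Fin N, (if (i : ℕ) + j = l then χ (s i) * χ (t j) else 0) * z ^ (l : ℕ) =
        χ (s i) * z ^ (i : ℕ) * (χ (t j) * z ^ (j : ℕ)) := by
    rw [Finset.sum_eq_single ⟨i + j, by omega⟩ (fun l _ hl => ?_) (by simp), if_pos rfl, pow_add]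
    · ring
    · rw [if_neg fun h => hl (Fin.ext h.symm), zero_mul]
  simp only [charEval, cauchyProduct, map_sum, apply_ite χ, hχ, map_zero]
  rw [Finset.sum_mul_sum]
  simp only [← coeff_term, Finset.sum_mul]
  rw [Finset.sum_comm]
  exact Finset.sum_congr rfl fun i _ => Finset.sum_comm

theorem hasStrictFDerivAt_cauchyProduct_zero (B : A →L[𝕜] A →L[𝕜] A) {a b N : ℕ}
    {E : Type*} [NormedAddCommGroup E] [NormedSpace 𝕜 E]
    (S : E →L[𝕜] (Fin a → A)) (T : E →L[𝕜] (Fin b → A)) :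
    HasStrictFDerivAt (fun u => cauchyProduct B N (S u) (T u)) (0 : E →L[𝕜] (Fin N → A)) 0 := by
  have product (i : Fin a) (j : Fin b) :
      HasStrictFDerivAt (fun u => B (S u i) (T u j)) (0 : E →L[𝕜] A) 0 := by
    simpa using B.hasStrictFDerivAt_of_bilinear (x := (0 : E))
      ((ContinuousLinearMap.proj i).comp S).hasStrictFDerivAt
      ((ContinuousLinearMap.proj j).comp T).hasStrictFDerivAt
  refine hasStrictFDerivAt_pi'' fun l => ?_
  have hsum : HasStrictFDerivAt (fun u => cauchyProduct B N (S u) (T u) l)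
      (∑ _i : Fin a, ∑ _j : Fin b, (0 : E →L[𝕜] A)) 0 := by
    refine HasStrictFDerivAt.fun_sum fun i _ => HasStrictFDerivAt.fun_sum fun j _ => ?_
    split_ifs
    exacts [product i j, hasStrictFDerivAt_const 0 0]
  simpa only [Finset.sum_const_zero, ContinuousLinearMap.comp_zero] using hsum

theorem eventually_exists_add_cauchyProduct_eq [CompleteSpace A] (B : A →L[𝕜] A →L[𝕜] A)
    {a b N : ℕ} (S : (Fin N → A) →L[𝕜] (Fin a → A)) (T : (Fin N → A) →L[𝕜] (Fin b → A)) :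
    ∀ᶠ r in 𝓝 (0 : Fin N → A),
      ∃ u, ∑ i, ‖S u i‖ < 1 ∧ u + cauchyProduct B N (S u) (T u) = r := by
  have hderiv : HasStrictFDerivAt (fun u => u + cauchyProduct B N (S u) (T u))
      (ContinuousLinearEquiv.refl 𝕜 (Fin N → A) : (Fin N → A) →L[𝕜] (Fin N → A)) 0 := by
    simpa using (hasStrictFDerivAt_id 0).fun_add (hasStrictFDerivAt_cauchyProduct_zero B S T)
  have hopen := hderiv.map_nhds_eq_of_equiv
  have hzero : 0 + cauchyProduct B N (S 0) (T 0) = 0 := by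
    ext l
    simp [cauchyProduct]
  have hsmall : ∀ᶠ u in 𝓝 (0 : Fin N → A), ∑ i, ‖S u i‖ < 1 := by
    have hcont : Continuous fun u => ∑ i, ‖S u i‖ := by fun_prop
    exact hcont.continuousAt.eventually_lt continuousAt_const (by simp)
  rw [hzero] at hopen
  rw [← hopen, Filter.eventually_map]
  exact hsmall.mono fun u hu => ⟨u, hu, rfl⟩

theorem degree_X_pow_div_lt {K : Type*} [Field K] {p : K[X]} {n l : ℕ}
    (hp : p.natDegree < n) (hl : l < n) : ((X : K[X]) ^ l / p).degree < (n - p.natDegree : ℕ) := by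
  rcases eq_or_ne p 0 with rfl | hp0
  · simp
  by_cases hdeg : p.degree ≤ (X ^ l : K[X]).degree
  · have hadd := degree_add_div hp0 hdeg
    have hq0 : (X ^ l / p : K[X]) ≠ 0 := (Polynomial.div_eq_zero_iff hp0).not.mpr hdeg.not_gt
    rw [degree_eq_natDegree hp0, degree_eq_natDegree hq0, degree_X_pow] at hadd
    rw [degree_eq_natDegree hq0, Nat.cast_lt]
    norm_cast at hadd
    omega
  · rw [(Polynomial.div_eq_zero_iff hp0).mpr (not_le.mp hdeg), degree_zero]
    exact WithBot.bot_lt_coe _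

theorem eventually_exists_remainder [CompleteSpace A] (B : A →L[𝕜] A →L[𝕜] A) {p : 𝕜[X]}
    (hp : p ≠ 0) {n : ℕ} (hn : p.natDegree < n) :
    ∀ᶠ r in 𝓝 (0 : Fin n → A), ∃ t : Fin p.natDegree → A, ∀ χ : A →L[𝕜] 𝕜,
      (∀ x, ‖χ x‖ ≤ ‖x‖) → (∀ x y, χ (B x y) = χ x * χ y) → ∀ z : 𝕜, ‖z‖ ≤ 1 →
        p.eval z + charEval χ z r = 0 → p.eval z + charEval χ z t = 0 := by
  let quot : Fin n → 𝕜[X] := fun l => X ^ (l : ℕ) / p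
  let rem : Fin n → 𝕜[X] := fun l => X ^ (l : ℕ) % p
  let S := polyComb (A := A) quot (n - p.natDegree)
  let T := polyComb (A := A) rem p.natDegree
  have hdivision (χ : A →L[𝕜] 𝕜) (z : 𝕜) (u : Fin n → A) :
      charEval χ z u = p.eval z * charEval χ z (S u) + charEval χ z (T u) := by
    have hquot (l : Fin n) : (quot l).degree < (n - p.natDegree : ℕ) :=
      degree_X_pow_div_lt hn l.2
    have hrem (l : Fin n) : (rem l).degree < p.natDegree :=
      (degree_mod_lt _ hp).trans_eq (degree_eq_natDegree hp)
    rw [charEval_polyComb χ z hquot, charEval_polyComb χ z hrem, Finset.mul_sum,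
      ← Finset.sum_add_distrib]
    refine Finset.sum_congr rfl fun l _ => ?_
    have heval := congrArg (eval z) (EuclideanDomain.div_add_mod (X ^ (l : ℕ)) p)
    rw [eval_add, eval_mul, eval_pow, eval_X] at heval
    rw [← heval]
    ring
  filter_upwards [eventually_exists_add_cauchyProduct_eq B S T] with r ⟨u, hSu, hr⟩
  refine ⟨T u, fun χ hχ hmul z hz hroot => ?_⟩
  have hfactor : (1 + charEval χ z (S u)) * (p.eval z + charEval χ z (T u)) = 0 := by
    rw [← hroot, ← hr, charEval_add, charEval_cauchyProduct hmul z (by omega), hdivision χ z u]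
    ring
  refine (mul_eq_zero.mp hfactor).resolve_left fun hone => ?_
  have hlt := (norm_charEval_le hχ hz (S u)).trans_lt hSu
  rw [eq_neg_of_add_eq_zero_right hone, norm_neg, norm_one] at hlt
  exact lt_irrefl 1 hlt

end PolynomialPerturbation

section FourierL1

open Filter Topology
open scoped FourierTransform RealInnerProductSpace

variable {V : Type*} [NormedAddCommGroup V] [InnerProductSpace ℝ V] [FiniteDimensional ℝ V]
  [MeasurableSpace V] [BorelSpace V]

/-- Evaluation at the frequency `w` of the Fourier transform `∫ e^{-2πi⟪x,w⟫} f(x) dx` of an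
`L¹` function, as a continuous linear functional. -/
noncomputable def fourierAt (w : V) : (V →₁[volume] ℂ) →L[ℂ] ℂ :=
  BoundedContinuousFunction.evalCLM ℂ w ∘L Real.Lp.fourierTransformCLM V ℂ

theorem fourierAt_apply (w : V) (f : V →₁[volume] ℂ) : fourierAt w f = 𝓕 (f : V → ℂ) w := rfl

theorem fourierAt_toL1 (w : V) {f : V → ℂ} (hf : Integrable f) :
    fourierAt w (hf.toL1 f) = 𝓕 f w :=
  Real.fourier_congr_ae hf.coeFn_toL1 w

theorem norm_fourierAt_le (w : V) (f : V →₁[volume] ℂ) : ‖fourierAt w f‖ ≤ ‖f‖ := by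
  rw [L1.norm_eq_integral_norm]
  exact VectorFourier.norm_fourierIntegral_le_integral_norm _ _ _ _ _

/-- The translate `x ↦ f(x - y)` of an `L¹` function. -/
noncomputable def translateL1 (y : V) : (V →₁[volume] ℂ) →ₗᵢ[ℂ] (V →₁[volume] ℂ) :=
  Lp.compMeasurePreservingₗᵢ ℂ (fun x => x - y) (measurePreserving_sub_right volume y)

theorem coeFn_translateL1 (y : V) (f : V →₁[volume] ℂ) :
    translateL1 y f =ᵐ[volume] fun x => f (x - y) :=
  Lp.coeFn_compMeasurePreserving f (measurePreserving_sub_right volume y)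

theorem translateL1_toL1 (y : V) {f : V → ℂ} (hf : Integrable f) :
    translateL1 y (hf.toL1 f) = (hf.comp_sub_right y).toL1 (fun x => f (x - y)) := rfl

theorem translateL1_zero (f : V →₁[volume] ℂ) : translateL1 0 f = f := by
  refine Lp.ext ((coeFn_translateL1 0 f).trans ?_)
  simp only [sub_zero, EventuallyEq.refl]

theorem continuous_translateL1 (f : V →₁[volume] ℂ) : Continuous fun y => translateL1 y f := by
  let shift : C(V, C(V, V)) := ContinuousMap.curry ⟨fun q => q.2 - q.1, by fun_prop⟩
  exact (continuous_const (y := f)).compMeasurePreservingLp shift.continuous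
    (fun y => measurePreserving_sub_right volume y) ENNReal.one_ne_top

theorem fourierAt_translateL1 (w y : V) (f : V →₁[volume] ℂ) :
    fourierAt w (translateL1 y f) = 𝐞 (-⟪y, w⟫) • fourierAt w f := by
  rw [fourierAt_apply, Real.fourier_congr_ae (coeFn_translateL1 y f) w, fourierAt_apply]
  have hshift :=
    congrFun (VectorFourier.fourierIntegral_comp_add_right 𝐞 volume (innerₗ V) f (-y)) w
  simp only [map_neg, LinearMap.neg_apply, innerₗ_apply_apply] at hshift
  simp only [sub_eq_add_neg]
  exact hshift

theorem integrable_smul_translateL1 (f g : V →₁[volume] ℂ) :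
    Integrable fun y => f y • translateL1 y g := by
  have hf := L1.integrable_coeFn f
  refine (hf.norm.mul_const ‖g‖).mono'
    (hf.aestronglyMeasurable.smul (continuous_translateL1 g).aestronglyMeasurable) ?_
  exact Eventually.of_forall fun y => by rw [norm_smul, LinearIsometry.norm_map]

/-- Convolution as a bounded bilinear map on `L¹`, obtained as the Bochner integral in `L¹` of the
translates of the second factor weighted by the first. -/
noncomputable def convL1 : (V →₁[volume] ℂ) →L[ℂ] (V →₁[volume] ℂ) →L[ℂ] (V →₁[volume] ℂ) :=
  LinearMap.mkContinuous₂
    (LinearMap.mk₂ ℂ (fun f g => ∫ y, f y • translateL1 y g)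
      (fun f f' g => by
        rw [← integral_add (integrable_smul_translateL1 f g) (integrable_smul_translateL1 f' g)]
        refine integral_congr_ae ?_
        filter_upwards [Lp.coeFn_add f f'] with y hy
        rw [hy, Pi.add_apply, add_smul])
      (fun c f g => by
        rw [← integral_smul]
        refine integral_congr_ae ?_
        filter_upwards [Lp.coeFn_smul c f] with y hy
        rw [hy, Pi.smul_apply, smul_assoc])
      (fun f g g' => by
        rw [← integral_add (integrable_smul_translateL1 f g) (integrable_smul_translateL1 f g')]
        simp only [map_add, smul_add])
      (fun c f g => by
        rw [← integral_smul]
        simp only [map_smul, smul_comm c])) 1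
    (fun f g => by
      rw [one_mul, L1.norm_eq_integral_norm f, LinearMap.mk₂_apply, ← integral_mul_const]
      refine (norm_integral_le_integral_norm _).trans_eq ?_
      simp only [norm_smul, LinearIsometry.norm_map])

theorem convL1_apply (f g : V →₁[volume] ℂ) : convL1 f g = ∫ y, f y • translateL1 y g := rfl

theorem fourierAt_convL1 (w : V) (f g : V →₁[volume] ℂ) :
    fourierAt w (convL1 f g) = fourierAt w f * fourierAt w g := by
  rw [convL1_apply, ← ContinuousLinearMap.integral_comp_comm _ (integrable_smul_translateL1 f g),
    fourierAt_apply w f, Real.fourier_eq, ← integral_mul_const]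
  simp only [map_smul, fourierAt_translateL1, smul_eq_mul, smul_mul_assoc, mul_smul_comm]

variable (V) in
theorem exists_integrable_fourier_eventuallyEq_one :
    ∃ Φ : V → ℂ, Integrable Φ ∧ 𝓕 Φ =ᶠ[𝓝 0] 1 := by
  let bump : ContDiffBump (0 : V) := ⟨1, 2, one_pos, one_lt_two⟩
  have hcompact : HasCompactSupport fun x => (bump x : ℂ) :=
    bump.hasCompactSupport.comp_left ofReal_zero
  have hsmooth : ContDiff ℝ (⊤ : ℕ∞) fun x => (bump x : ℂ) :=
    ofRealCLM.contDiff.comp bump.contDiff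
  let β : SchwartzMap V ℂ := hcompact.toSchwartzMap hsmooth
  refine ⟨(𝓕⁻ β : SchwartzMap V ℂ), SchwartzMap.integrable _, ?_⟩
  rw [← SchwartzMap.fourier_coe, FourierTransform.fourier_fourierInv_eq]
  filter_upwards [bump.eventuallyEq_one] with w hw
  exact congrArg ofReal hw

/-- The modulated dilation of `Φ` whose Fourier transform is `w ↦ 𝓕 Φ (c⁻¹ • (w - w₀))`. When
`𝓕 Φ = 1` near `0` and `c → 0`, these are localized units at the frequency `w₀`. -/
noncomputable def localizer (Φ : V → ℂ) (w₀ : V) (c : ℝ) (x : V) : ℂ :=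
  |c ^ Module.finrank ℝ V| • 𝐞 ⟪x, w₀⟫ • Φ (c • x)

theorem integrable_localizer {Φ : V → ℂ} (hΦ : Integrable Φ) (w₀ : V) {c : ℝ} (hc : c ≠ 0) :
    Integrable (localizer Φ w₀ c) := by
  have hmod : Integrable fun x => 𝐞 (-⟪x, -w₀⟫) • Φ (c • x) :=
    (Real.fourierIntegral_convergent_iff (-w₀)).mpr (hΦ.comp_smul hc)
  simp only [inner_neg_right, neg_neg] at hmod
  exact hmod.smul |c ^ Module.finrank ℝ V|

theorem fourier_localizer (Φ : V → ℂ) (w₀ : V) {c : ℝ} (hc : c ≠ 0) (w : V) :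
    𝓕 (localizer Φ w₀ c) w = 𝓕 Φ (c⁻¹ • (w - w₀)) := by
  have hphase (x : V) : 𝐞 (-⟪x, w⟫) • localizer Φ w₀ c x =
      |c ^ Module.finrank ℝ V| • 𝐞 (-⟪c • x, c⁻¹ • (w - w₀)⟫) • Φ (c • x) := by
    have hexp : -⟪c • x, c⁻¹ • (w - w₀)⟫ = -⟪x, w⟫ + ⟪x, w₀⟫ := by
      rw [real_inner_smul_left, real_inner_smul_right, mul_inv_cancel_left₀ hc, inner_sub_right]
      ring
    rw [localizer, smul_comm, smul_smul (𝐞 _), ← AddChar.map_add_eq_mul, hexp]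
  simp only [Real.fourier_eq, hphase, integral_smul]
  rw [Measure.integral_comp_smul volume fun x => 𝐞 (-⟪x, c⁻¹ • (w - w₀)⟫) • Φ x, smul_smul,
    ← abs_mul, mul_inv_cancel₀ (pow_ne_zero _ hc), abs_one, one_smul]

theorem norm_translateL1_localizer_sub {Φ : V → ℂ} (hΦ : Integrable Φ volume) (w₀ y : V) {c : ℝ}
    (hc : c ≠ 0) :
    ‖translateL1 y ((integrable_localizer hΦ w₀ hc).toL1 (localizer Φ w₀ c)) -
        ((𝐞 (-⟪y, w₀⟫) : Circle) : ℂ) • (integrable_localizer hΦ w₀ hc).toL1 (localizer Φ w₀ c)‖ =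
      ‖translateL1 (c • y) (hΦ.toL1 Φ) - hΦ.toL1 Φ‖ := by
  have hpoint (x : V) :
      localizer Φ w₀ c (x - y) - ((𝐞 (-⟪y, w₀⟫) : Circle) : ℂ) • localizer Φ w₀ c x =
        |c ^ Module.finrank ℝ V| • 𝐞 ⟪x - y, w₀⟫ • (Φ (c • x - c • y) - Φ (c • x)) := by
    have hchar : 𝐞 ⟪x - y, w₀⟫ = 𝐞 (-⟪y, w₀⟫) * 𝐞 ⟪x, w₀⟫ := by
      rw [← AddChar.map_add_eq_mul, inner_sub_left, neg_add_eq_sub]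
    rw [← Circle.smul_def, localizer, localizer, hchar, smul_comm (𝐞 _) |_|, smul_smul, ← smul_sub,
      ← smul_sub, smul_sub c]
  have hW := integrable_localizer hΦ w₀ hc
  rw [translateL1_toL1, translateL1_toL1, ← hW.toL1_smul,
    ← Integrable.toL1_sub _ (fun x => _ • localizer Φ w₀ c x) (hW.comp_sub_right y)
      (hW.smul ((𝐞 (-⟪y, w₀⟫) : Circle) : ℂ)),
    ← Integrable.toL1_sub _ _ (hΦ.comp_sub_right (c • y)) hΦ,
    L1.norm_of_fun_eq_integral_norm, L1.norm_of_fun_eq_integral_norm]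
  simp only [Pi.sub_apply, hpoint, norm_smul, Circle.norm_smul, integral_const_mul]
  rw [Measure.integral_comp_smul volume fun x => ‖Φ (x - c • y) - Φ x‖, Real.norm_eq_abs, abs_abs,
    smul_eq_mul, ← mul_assoc, ← abs_mul, mul_inv_cancel₀ (pow_ne_zero _ hc), abs_one, one_mul]

theorem tendsto_integral_norm_mul_translateL1_sub (f g : V →₁[volume] ℂ) :
    Tendsto (fun c : ℝ => ∫ y, ‖f y‖ * ‖translateL1 (c • y) g - g‖) (𝓝 0) (𝓝 0) := by
  have hf := (L1.integrable_coeFn f).norm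
  have hcont : Continuous fun q : ℝ × V => ‖translateL1 (q.1 • q.2) g - g‖ :=
    (((continuous_translateL1 g).comp continuous_smul).sub continuous_const).norm
  have hbound (c : ℝ) (y : V) : ‖translateL1 (c • y) g - g‖ ≤ 2 * ‖g‖ := by
    refine (norm_sub_le _ _).trans_eq ?_
    rw [LinearIsometry.norm_map, two_mul]
  have hlim (y : V) :
      Tendsto (fun c : ℝ => ‖f y‖ * ‖translateL1 (c • y) g - g‖) (𝓝 0) (𝓝 0) :=
    (continuous_const.mul (hcont.comp (.prodMk_left y))).tendsto' _ _ (by simp [translateL1_zero])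
  have hlim_integral : Tendsto (fun c : ℝ => ∫ y, ‖f y‖ * ‖translateL1 (c • y) g - g‖) (𝓝 0)
      (𝓝 (∫ _ : V, (0 : ℝ))) := by
    refine tendsto_integral_filter_of_dominated_convergence (fun y => ‖f y‖ * (2 * ‖g‖))
      (Eventually.of_forall fun c => hf.aestronglyMeasurable.mul
        (hcont.comp (.prodMk_right c)).aestronglyMeasurable)
      (Eventually.of_forall fun c => Eventually.of_forall fun y => ?_)
      (hf.mul_const _) (Eventually.of_forall hlim)
    rw [norm_mul, norm_norm, norm_norm]
    exact mul_le_mul_of_nonneg_left (hbound c y) (norm_nonneg _)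
  rwa [integral_zero] at hlim_integral

theorem norm_convL1_localizer_sub_le {Φ : V → ℂ} (hΦ : Integrable Φ volume) (w₀ : V) {c : ℝ}
    (hc : c ≠ 0) (f : V →₁[volume] ℂ) :
    ‖convL1 f ((integrable_localizer hΦ w₀ hc).toL1 (localizer Φ w₀ c)) -
        fourierAt w₀ f • (integrable_localizer hΦ w₀ hc).toL1 (localizer Φ w₀ c)‖ ≤
      ∫ y, ‖f y‖ * ‖translateL1 (c • y) (hΦ.toL1 Φ) - hΦ.toL1 Φ‖ := by
  set W := (integrable_localizer hΦ w₀ hc).toL1 (localizer Φ w₀ c)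
  have hnorm (y : V) := norm_translateL1_localizer_sub hΦ w₀ y hc
  have hf : Integrable fun y => 𝐞 (-⟪y, w₀⟫) • f y :=
    (Real.fourierIntegral_convergent_iff w₀).mpr (L1.integrable_coeFn f)
  have hdiff : convL1 f W - fourierAt w₀ f • W =
      ∫ y, f y • (translateL1 y W - ((𝐞 (-⟪y, w₀⟫) : Circle) : ℂ) • W) := by
    rw [convL1_apply, fourierAt_apply, Real.fourier_eq, ← integral_smul_const,
      ← integral_sub (integrable_smul_translateL1 f W) (hf.smul_const W)]
    refine integral_congr_ae (Eventually.of_forall fun y => ?_)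
    simp only [smul_sub, Circle.smul_def, smul_eq_mul, smul_smul, mul_comm]
  rw [hdiff]
  refine (norm_integral_le_integral_norm _).trans_eq ?_
  simp only [norm_smul, ← hnorm, W]

theorem exists_localUnits (w₀ : V) :
    ∃ W : ℕ → V →₁[volume] ℂ, (∀ k, ∀ᶠ w in 𝓝 w₀, fourierAt w (W k) = 1) ∧
      ∀ f, Tendsto (fun k => convL1 f (W k) - fourierAt w₀ f • W k) atTop (𝓝 0) := by
  obtain ⟨Φ, hΦ, hΦone⟩ := exists_integrable_fourier_eventuallyEq_one V
  have hc (k : ℕ) : (1 / (k + 1) : ℝ) ≠ 0 := Nat.one_div_pos_of_nat.ne'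
  refine ⟨fun k => (integrable_localizer hΦ w₀ (hc k)).toL1 _, fun k => ?_, fun f => ?_⟩
  · have hrescale : Tendsto (fun w => (1 / (k + 1) : ℝ)⁻¹ • (w - w₀)) (𝓝 w₀) (𝓝 0) :=
      Continuous.tendsto' (by fun_prop) _ _ (by simp)
    filter_upwards [hrescale.eventually hΦone] with w hw
    rw [fourierAt_toL1, fourier_localizer Φ w₀ (hc k)]
    exact hw
  · exact squeeze_zero_norm (fun k => norm_convL1_localizer_sub_le hΦ w₀ (hc k) f)
      ((tendsto_integral_norm_mul_translateL1_sub f _).comp tendsto_one_div_add_atTop_nhds_zero_nat)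

end FourierL1

section LocalMonicRelation

open Filter Topology Polynomial

variable {V : Type*} [NormedAddCommGroup V] [InnerProductSpace ℝ V] [FiniteDimensional ℝ V]
  [MeasurableSpace V] [BorelSpace V] {S : Set (V × ℂ)} {w₀ : V}

/-- Over a neighbourhood of `w₀`, the fibres of `S` consist of roots of a monic polynomial of
degree `d` whose lower coefficients are Fourier transforms of `L¹` functions. -/
def HasLocalMonicRelation (S : Set (V × ℂ)) (w₀ : V) (d : ℕ) : Prop :=
  ∃ φ : Fin d → V →₁[volume] ℂ,
    ∀ᶠ w in 𝓝 w₀, ∀ z, (w, z) ∈ S → charEval (fourierAt w) z φ = -z ^ d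

theorem HasLocalMonicRelation.succ {d : ℕ} (h : HasLocalMonicRelation S w₀ d) :
    HasLocalMonicRelation S w₀ (d + 1) := by
  obtain ⟨φ, hφ⟩ := h
  refine ⟨Fin.cons 0 φ, hφ.mono fun w hw z hz => ?_⟩
  rw [charEval_cons, map_zero, zero_add, hw z hz, pow_succ']
  ring

theorem HasLocalMonicRelation.of_le {d e : ℕ} (h : HasLocalMonicRelation S w₀ d) (hde : d ≤ e) :
    HasLocalMonicRelation S w₀ e :=
  Nat.le_induction h (fun _ _ => HasLocalMonicRelation.succ) e hde

theorem hasLocalMonicRelation_of_eval_add_charEval_eq_zero {p : ℂ[X]} (hp : p ≠ 0)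
    {W : V →₁[volume] ℂ} (hW : ∀ᶠ w in 𝓝 w₀, fourierAt w W = 1)
    (t : Fin p.natDegree → V →₁[volume] ℂ)
    (ht : ∀ᶠ w in 𝓝 w₀, ∀ z, (w, z) ∈ S → p.eval z + charEval (fourierAt w) z t = 0) :
    HasLocalMonicRelation S w₀ p.natDegree := by
  have hlead : p.leadingCoeff ≠ 0 := leadingCoeff_ne_zero.mpr hp
  refine ⟨fun i => p.leadingCoeff⁻¹ • (p.coeff i • W + t i), ?_⟩
  filter_upwards [hW, ht] with w hWw htw z hz
  have hcharEval : charEval (fourierAt w) z (fun i => p.leadingCoeff⁻¹ • (p.coeff i • W + t i)) =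
      p.leadingCoeff⁻¹ * (∑ i : Fin p.natDegree, p.coeff i * z ^ (i : ℕ) +
        charEval (fourierAt w) z t) := by
    simp only [charEval, map_smul, map_add, hWw, smul_eq_mul, mul_one, ← Finset.sum_add_distrib,
      Finset.mul_sum, ← add_mul, mul_assoc]
  have hroot := htw z hz
  rw [eval_eq_sum_range, Finset.sum_range_succ, ← Fin.sum_univ_eq_sum_range fun i =>
    p.coeff i * z ^ i, coeff_natDegree] at hroot
  rw [hcharEval, inv_mul_eq_iff_eq_mul₀ hlead]
  linear_combination hroot

theorem hasLocalMonicRelation_of_charEval_eq_zero (hS : ∀ w z, (w, z) ∈ S → ‖z‖ ≤ 1) {n : ℕ}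
    {f : Fin n → V →₁[volume] ℂ} (hf : ∀ w z, (w, z) ∈ S → charEval (fourierAt w) z f = 0)
    {j : Fin n} (hj : fourierAt w₀ (f j) ≠ 0) : HasLocalMonicRelation S w₀ (n - 1) := by
  let p : ℂ[X] := ofFn n fun l => fourierAt w₀ (f l)
  have hp0 : p ≠ 0 := fun h => hj <| by
    rw [← ofFn_coeff_eq_val_of_lt (fun l => fourierAt w₀ (f l)) j.2]
    exact (congrArg (coeff · j) h).trans (coeff_zero _)
  have hpn : p.natDegree < n := ofFn_natDegree_lt (Nat.one_le_iff_ne_zero.mpr j.pos.ne') _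
  have heval (z : ℂ) : p.eval z = charEval (fourierAt w₀) z f := by
    simp only [p, ofFn_eq_sum_monomial, eval_finsetSum, eval_monomial, charEval]
  obtain ⟨W, hWone, hWlim⟩ := exists_localUnits w₀
  have hremainder := eventually_exists_remainder (convL1 (V := V)) hp0 hpn
  obtain ⟨k, t, ht⟩ := ((tendsto_pi_nhds.mpr fun l => hWlim (f l)).eventually hremainder).exists
  refine (hasLocalMonicRelation_of_eval_add_charEval_eq_zero hp0 (hWone k) t ?_).of_le (by omega)
  filter_upwards [hWone k] with w hw z hz
  refine ht (fourierAt w) (norm_fourierAt_le w) (fourierAt_convL1 w) z (hS w z hz) ?_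
  have hperturbation : charEval (fourierAt w) z
      (fun l => convL1 (f l) (W k) - fourierAt w₀ (f l) • W k) =
        charEval (fourierAt w) z f - charEval (fourierAt w₀) z f := by
    simp only [charEval, map_sub, map_smul, fourierAt_convL1, hw, mul_one, smul_eq_mul, sub_mul,
      Finset.sum_sub_distrib]
  rw [hperturbation, hf w z hz, heval]
  ring

end LocalMonicRelation

open scoped FourierTransform in
theorem FT_eq_fourier (f : ℝ → ℂ) (ξ : ℝ) : FT f ξ = 𝓕 f (-ξ / 2) := by
  rw [Real.fourier_eq']
  refine integral_congr_ae (Filter.Eventually.of_forall fun x => ?_)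
  simp only [smul_eq_mul, RCLike.inner_apply, conj_trivial]
  congr 2
  push_cast
  ring

theorem norm_cexpEta (η : ℝ) : ‖cexpEta η‖ = 1 := by
  rw [cexpEta, mul_right_comm, ← ofReal_mul, norm_exp_ofReal_mul_I]

theorem mem_projStarSu_of_eventually {Λ : Set (ℝ × ℝ)} {n k : ℕ} {ξ₀ : ℝ}
    (hξ₀ : ξ₀ ∈ projExact Λ k) {φ : Fin (n - 1) → ℝ → ℂ} (hφ : ∀ i, Integrable (φ i))
    (hev : ∀ᶠ ξ in nhds ξ₀, ∀ η, (ξ, η) ∈ Λ →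
      ∑ i, FT (φ i) ξ * cexpEta η ^ (i : ℕ) = -cexpEta η ^ (n - 1)) :
    ξ₀ ∈ projStarSu Λ n k := by
  obtain ⟨a, b, hξ₀ab, hab⟩ := mem_nhds_iff_exists_Ioo_subset.mp hev
  exact ⟨hξ₀, a, b, hξ₀ab, φ, hφ, fun ξ hξ η hη => hab hξ.1 η hη.2⟩

theorem vanish_on_pik_general (n : ℕ) (Λ : Set (ℝ × ℝ))
    (f : Fin n → ℝ → ℂ) (hf : ∀ m, Integrable (f m))
    (heq : ∀ ξ η : ℝ, (ξ, η) ∈ Λ → ∑ m : Fin n, cexpEta η ^ (m : ℕ) * FT (f m) ξ = 0)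
    (k : ℕ) (ξ₀ : ℝ) (hξ₀ : ξ₀ ∈ projExact Λ k \ projStarSu Λ n k) (j : Fin n) :
    FT (f j) ξ₀ = 0 := by
  by_contra hj
  let S : Set (ℝ × ℂ) := {q | ∃ ξ η, (ξ, η) ∈ Λ ∧ q = (-ξ / 2, cexpEta η)}
  have hS : ∀ w z, (w, z) ∈ S → ‖z‖ ≤ 1 := by
    rintro _ _ ⟨ξ, η, -, ⟨⟩⟩
    exact (norm_cexpEta η).le
  have hfS : ∀ w z, (w, z) ∈ S → charEval (fourierAt w) z (fun m => (hf m).toL1 (f m)) = 0 := by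
    rintro _ _ ⟨ξ, η, hξη, ⟨⟩⟩
    simpa only [charEval, fourierAt_toL1, ← FT_eq_fourier, mul_comm] using heq ξ η hξη
  have hjS : fourierAt (-ξ₀ / 2) ((hf j).toL1 (f j)) ≠ 0 := by
    rwa [fourierAt_toL1, ← FT_eq_fourier]
  obtain ⟨φ, hφ⟩ := hasLocalMonicRelation_of_charEval_eq_zero hS hfS hjS
  refine hξ₀.2 (mem_projStarSu_of_eventually hξ₀.1 (fun i => L1.integrable_coeFn (φ i)) ?_)
  have hcont : Continuous fun ξ : ℝ => -ξ / 2 := by fun_prop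
  filter_upwards [hcont.continuousAt.eventually hφ] with ξ hξ η hξη
  simpa only [charEval, fourierAt_apply, ← FT_eq_fourier] using hξ _ ⟨ξ, η, hξη, rfl⟩

theorem vanish_on_pik (n : ℕ) (hn : 2 ≤ n) (Λ : Set (ℝ × ℝ))
    (hclosed : IsClosed Λ) (hper : Periodic2 Λ)
    (f : Fin n → ℝ → ℂ) (hf : ∀ m, MeasureTheory.Integrable (f m))
    (heq : ∀ ξ η : ℝ, (ξ, η) ∈ Λ →
      ∑ m : Fin n, cexpEta η ^ (m : ℕ) * FT (f m) ξ = 0)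
    (k : ℕ) (hk2 : 2 ≤ k) (hkn : k ≤ n - 1)
    (ξ₀ : ℝ) (hξ₀ : ξ₀ ∈ projExact Λ k \ projStarSu Λ n k) :
    ∀ j, FT (f j) ξ₀ = 0 :=
  vanish_on_pik_general n Λ f hf heq k ξ₀ hξ₀
end

section
/- Let n ≥ 2 be an integer and let Λ ⊂ ℝ² be a closed set that is 2-periodic with respect to the second variable. Let f_1, …, f_n ∈ L¹(ℝ) satisfy f̂_1(ξ) + e^{πiη} f̂_2(ξ) + ⋯ + e^{(n−1)πiη} f̂_n(ξ) = 0 for all (ξ, η) ∈ Λ. If ξ_0 ∈ Π^n(Λ), then f̂_j(ξ_0) = 0 for every j = 1, …, n. -/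
open MeasureTheory Complex

/-!
At a fixed `ξ₀` the hypothesis says that the polynomial `∑ f̂_j(ξ₀) z^(j-1)`, of degree less than
`n`, vanishes at `z = e^{πiη}` for every `η ∈ Img(ξ₀)`. These points are distinct because
`η ↦ e^{πiη}` is injective on `[0, 2)`, so there are at least `n` of them and all coefficients
vanish.
-/

theorem nonempty_fin_embedding_of_le_encard {α : Type*} {s : Set α} {n : ℕ}
    (hs : (n : ℕ∞) ≤ s.encard) : Nonempty (Fin n ↪ s) := by
  obtain ⟨t, hts, ht⟩ := Set.exists_subset_encard_eq hs
  have : Finite t := Set.finite_of_encard_eq_coe ht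
  have hcard : Nat.card t = n := by
    rw [Nat.card_coe_set_eq, Set.ncard, ht, ENat.toNat_natCast]
  exact ⟨(Finite.equivFinOfCardEq hcard).symm.toEmbedding.trans (Set.embeddingOfSubset t s hts)⟩

theorem eq_zero_of_sum_pow_mul_eq_zero_of_le_encard {ι R : Type*} [CommRing R] [IsDomain R]
    {n : ℕ} {s : Set ι} {z : ι → R} {c : Fin n → R} (hz : s.InjOn z)
    (hs : (n : ℕ∞) ≤ s.encard) (hsum : ∀ i ∈ s, ∑ m : Fin n, z i ^ (m : ℕ) * c m = 0) :
    c = 0 := by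
  obtain ⟨e⟩ := nonempty_fin_embedding_of_le_encard hs
  exact Matrix.eq_zero_of_forall_index_sum_pow_mul_eq_zero (hz.injective.comp e.injective)
    fun k => hsum (e k) (e k).2

theorem cexpEta_eq_circleExp (η : ℝ) : cexpEta η = Circle.exp (Real.pi * η) := by
  rw [cexpEta, Circle.coe_exp]
  push_cast
  ring_nf

theorem injOn_cexpEta_Ico {a b : ℝ} (hab : b - a ≤ 2) : Set.InjOn cexpEta (Set.Ico a b) := by
  have hlen : Real.pi * b - Real.pi * a ≤ 2 * Real.pi := by
    linarith [mul_le_mul_of_nonneg_left hab Real.pi_pos.le]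
  intro x hx y hy hxy
  rw [cexpEta_eq_circleExp, cexpEta_eq_circleExp, Circle.coe_inj] at hxy
  have hmem {t : ℝ} (ht : t ∈ Set.Ico a b) :
      Real.pi * t ∈ Set.Ico (Real.pi * a) (Real.pi * b) :=
    ⟨mul_le_mul_of_nonneg_left ht.1 Real.pi_pos.le, mul_lt_mul_of_pos_left ht.2 Real.pi_pos⟩
  exact mul_left_cancel₀ Real.pi_ne_zero (Circle.exp_injOn_Ico hlen (hmem hx) (hmem hy) hxy)

theorem injOn_cexpEta_Img (Λ : Set (ℝ × ℝ)) (ξ : ℝ) : Set.InjOn cexpEta (Img Λ ξ) :=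
  (injOn_cexpEta_Ico (by norm_num)).mono fun _ hη => hη.1

theorem vanish_on_pin_general {n : ℕ} {Λ : Set (ℝ × ℝ)} {ξ₀ : ℝ} {c : Fin n → ℂ}
    (hξ₀ : ξ₀ ∈ projAtLeast Λ n)
    (hc : ∀ η ∈ Img Λ ξ₀, ∑ m : Fin n, cexpEta η ^ (m : ℕ) * c m = 0) :
    c = 0 :=
  eq_zero_of_sum_pow_mul_eq_zero_of_le_encard (injOn_cexpEta_Img Λ ξ₀) hξ₀.2 hc

theorem vanish_on_pin (n : ℕ) (hn : 2 ≤ n) (Λ : Set (ℝ × ℝ))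
    (hclosed : IsClosed Λ) (hper : Periodic2 Λ)
    (f : Fin n → ℝ → ℂ) (hf : ∀ m, MeasureTheory.Integrable (f m))
    (heq : ∀ ξ η : ℝ, (ξ, η) ∈ Λ →
      ∑ m : Fin n, cexpEta η ^ (m : ℕ) * FT (f m) ξ = 0)
    (ξ₀ : ℝ) (hξ₀ : ξ₀ ∈ projAtLeast Λ n) :
    ∀ j, FT (f j) ξ₀ = 0 :=
  congrFun (vanish_on_pin_general hξ₀ fun η hη => heq ξ₀ η hη.2)
end
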